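/- Let A, B be real n×n matrices such that A + Aᵀ and B + Bᵀ are both positive semidefinite and at least one of them is positive definite, and let α > 0. Then the n²×n² matrices αI + A⊗Iₙ and αI + Iₙ⊗B are invertible, and the ADI iteration matrix T_α = (αI + Iₙ⊗B)⁻¹(αI − A⊗Iₙ)(αI + A⊗Iₙ)⁻¹(αI − Iₙ⊗B) has spectral radius strictly less than 1. -/

import Mathlib

/-!
For `α > 0` and any matrix `M`, the parallelogram-type identity
`‖(α + M)x‖² = ‖(α - M)x‖² + 2α x*(M + M*)x` (`normSq_cayley`) says that the Cayley transform
`(α - M)(α + M)⁻¹` is a contraction when `M + M*` is positive semidefinite, and a strict one when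
`M + M*` is positive definite. The iteration matrix is similar to the product of the Cayley
transforms of `H = A ⊗ I` and `V = I ⊗ B`, so one strict contraction suffices.

This is carried out on an eigenpair `T v = μ v` of the complexified iteration matrix
(`eigenvalue_norm_lt_one`): with `w = (α + H)⁻¹(α - V)v` one has `(α + H)w = (α - V)v` and
`(α - H)w = μ(α + V)v`, and applying the identity to `H, w` and to `V, v` gives
`(|μ|² - 1)‖(α - V)v‖² + 2α|μ|² v*(V + V*)v + 2α w*(H + H*)w = 0`.
If `|μ| ≥ 1`, every term is nonnegative, hence zero, and definiteness of one of the two forms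
forces `v = 0`. The spectrum of a matrix is finite, so the bound on each eigenvalue bounds the
spectral radius strictly.
-/

open Matrix
open scoped Kronecker

section Aux

open scoped ComplexOrder MatrixOrder

variable {m : Type*} [Fintype m]

/-- If the symmetric part of `M` is positive semidefinite, then `α + M` has positive definite
symmetric part, and so has trivial kernel. -/
lemma isUnit_smul_one_add [DecidableEq m] {M : Matrix m m ℝ} (hM : (M + Mᵀ).PosSemidef) {α : ℝ} (hα : 0 < α) :
    IsUnit (α • (1 : Matrix m m ℝ) + M) := by
  rw [← mulVec_injective_iff_isUnit]
  refine (injective_iff_map_eq_zero (mulVecLin (α • (1 : Matrix m m ℝ) + M))).2 fun x hx => ?_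
  have hx' : α • x + M *ᵥ x = 0 := by
    simpa [add_mulVec, smul_mulVec] using hx
  have h0 : 0 ≤ x ⬝ᵥ ((M + Mᵀ) *ᵥ x) := by simpa using hM.dotProduct_mulVec_nonneg x
  have ht : x ⬝ᵥ (Mᵀ *ᵥ x) = x ⬝ᵥ (M *ᵥ x) := by
    rw [dotProduct_mulVec, vecMul_transpose, dotProduct_comm]
  have h1 : α * (x ⬝ᵥ x) + x ⬝ᵥ (M *ᵥ x) = 0 := by
    simpa using congrArg (fun y => x ⬝ᵥ y) hx'
  rw [add_mulVec, dotProduct_add, ht] at h0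
  have h2 : 0 ≤ x ⬝ᵥ x := by simpa using dotProduct_star_self_nonneg x
  have h3 : x ⬝ᵥ x = 0 := by nlinarith
  exact dotProduct_self_eq_zero.1 h3

lemma posSemidef_map_ofReal [DecidableEq m] {S : Matrix m m ℝ} (hS : S.PosSemidef) :
    (S.map Complex.ofReal).PosSemidef := by
  obtain ⟨C, hC⟩ := CStarAlgebra.nonneg_iff_eq_star_mul_self.mp hS.nonneg
  rw [star_eq_conjTranspose] at hC
  subst hC
  have : (Cᴴ * C).map Complex.ofReal = (C.map Complex.ofReal)ᴴ * C.map Complex.ofReal := by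
    ext i j
    simp [mul_apply]
  rw [this]
  exact posSemidef_conjTranspose_mul_self _

lemma posDef_map_ofReal [DecidableEq m] {S : Matrix m m ℝ} (hS : S.PosDef) :
    (S.map Complex.ofReal).PosDef :=
  (posSemidef_map_ofReal hS.posSemidef).posDef_iff_isUnit.2
    (hS.isUnit.map (Complex.ofRealHom.mapMatrix (m := m)))

/-- The energy identity behind the contractivity of the Cayley transform. -/
lemma normSq_cayley (α : ℝ) (M : Matrix m m ℂ) (x : m → ℂ) :
    (star ((α : ℂ) • x + M *ᵥ x) ⬝ᵥ ((α : ℂ) • x + M *ᵥ x)).re =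
      (star ((α : ℂ) • x - M *ᵥ x) ⬝ᵥ ((α : ℂ) • x - M *ᵥ x)).re +
        2 * α * (star x ⬝ᵥ ((M + Mᴴ) *ᵥ x)).re := by
  have h : star x ⬝ᵥ (Mᴴ *ᵥ x) = star (M *ᵥ x) ⬝ᵥ x := by
    rw [dotProduct_mulVec, star_mulVec]
  rw [add_mulVec M, dotProduct_add (star x), h]
  simp only [star_add, star_sub, star_smul, add_dotProduct, sub_dotProduct, dotProduct_add,
    dotProduct_sub, smul_dotProduct, dotProduct_smul, smul_eq_mul, Complex.star_def,
    Complex.conj_ofReal, Complex.add_re, Complex.sub_re, Complex.re_ofReal_mul]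
  ring

lemma normSq_smul (μ : ℂ) (x : m → ℂ) :
    (star (μ • x) ⬝ᵥ (μ • x)).re = ‖μ‖ ^ 2 * (star x ⬝ᵥ x).re := by
  rw [star_smul, smul_dotProduct, dotProduct_smul, smul_eq_mul, smul_eq_mul, ← mul_assoc,
    Complex.star_def, Complex.conj_mul', ← Complex.ofReal_pow, Complex.re_ofReal_mul]

lemma eigenvalue_norm_lt_one {H V : Matrix m m ℂ} (hH : (H + Hᴴ).PosSemidef)
    (hV : (V + Vᴴ).PosSemidef) (hpd : (H + Hᴴ).PosDef ∨ (V + Vᴴ).PosDef)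
    {α : ℝ} (hα : 0 < α) {μ : ℂ} {v w : m → ℂ} (hv : v ≠ 0)
    (h1 : (α : ℂ) • w + H *ᵥ w = (α : ℂ) • v - V *ᵥ v)
    (h2 : (α : ℂ) • w - H *ᵥ w = μ • ((α : ℂ) • v + V *ᵥ v)) : ‖μ‖ < 1 := by
  by_contra! hμ
  have eH := normSq_cayley α H w
  have eV := normSq_cayley α V v
  rw [h1, h2, normSq_smul, eV] at eH
  have pH : 0 ≤ (star w ⬝ᵥ ((H + Hᴴ) *ᵥ w)).re := hH.re_dotProduct_nonneg w
  have pV : 0 ≤ (star v ⬝ᵥ ((V + Vᴴ) *ᵥ v)).re := hV.re_dotProduct_nonneg v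
  have pN : 0 ≤ (star ((α : ℂ) • v - V *ᵥ v) ⬝ᵥ ((α : ℂ) • v - V *ᵥ v)).re :=
    (Complex.nonneg_iff.1 (dotProduct_star_self_nonneg _)).1
  have hμ2 : 1 ≤ ‖μ‖ ^ 2 := one_le_pow₀ hμ
  generalize ‖μ‖ ^ 2 = c at *
  set N := (star ((α : ℂ) • v - V *ᵥ v) ⬝ᵥ ((α : ℂ) • v - V *ᵥ v)).re
  have kN : 0 ≤ (c - 1) * N := mul_nonneg (by linarith) pN
  have kV := mul_nonneg hα.le pV
  have kV' := mul_nonneg (sub_nonneg.2 hμ2) kV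
  have kH := mul_nonneg hα.le pH
  have zV : α * (star v ⬝ᵥ ((V + Vᴴ) *ᵥ v)).re = 0 := by nlinarith
  have zH : α * (star w ⬝ᵥ ((H + Hᴴ) *ᵥ w)).re = 0 := by nlinarith
  have qV (hp : (V + Vᴴ).PosDef) : False :=
    ((mul_pos hα (hp.re_dotProduct_pos hv)).ne') zV
  rcases hpd with hp | hp
  · have hw : w = 0 := by
      by_contra hw
      exact (mul_pos hα (hp.re_dotProduct_pos hw)).ne' zH
    subst hw
    have hμ0 : μ ≠ 0 := by
      rintro rfl
      norm_num at hμ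
    have s1 : (α : ℂ) • v - V *ᵥ v = 0 := by simpa using h1.symm
    have s2 : (α : ℂ) • v + V *ᵥ v = 0 := by
      have h3 : μ • ((α : ℂ) • v + V *ᵥ v) = 0 := by
        rw [← h2, mulVec_zero, smul_zero, sub_zero]
      exact (smul_eq_zero.1 h3).resolve_left hμ0
    -- `(α - V)v = 0` and `(α + V)v = 0` add up to `2αv = 0`.
    have s3 : (2 * α : ℂ) • v = 0 := by
      have := congrArg₂ (· + ·) s1 s2
      simpa [two_mul, add_smul] using this
    have : (2 * α : ℂ) ≠ 0 := by
      exact_mod_cast (by positivity : (2 * α : ℝ) ≠ 0)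
    exact hv ((smul_eq_zero.1 s3).resolve_left this)
  · exact qV hp

lemma map_smul_one_add_mulVec [DecidableEq m] (α : ℝ) (M : Matrix m m ℝ) (x : m → ℂ) :
    (α • (1 : Matrix m m ℝ) + M).map Complex.ofReal *ᵥ x =
      (α : ℂ) • x + M.map Complex.ofReal *ᵥ x := by
  have : (α • (1 : Matrix m m ℝ) + M).map Complex.ofReal =
      (α : ℂ) • (1 : Matrix m m ℂ) + M.map Complex.ofReal := by
    ext i j
    simp [one_apply, apply_ite Complex.ofReal]
  rw [this, add_mulVec, smul_mulVec, one_mulVec]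

lemma map_smul_one_sub_mulVec [DecidableEq m] (α : ℝ) (M : Matrix m m ℝ) (x : m → ℂ) :
    (α • (1 : Matrix m m ℝ) - M).map Complex.ofReal *ᵥ x =
      (α : ℂ) • x - M.map Complex.ofReal *ᵥ x := by
  have : (α • (1 : Matrix m m ℝ) - M).map Complex.ofReal =
      (α : ℂ) • (1 : Matrix m m ℂ) - M.map Complex.ofReal := by
    ext i j
    simp [one_apply, apply_ite Complex.ofReal]
  rw [this, sub_mulVec, smul_mulVec, one_mulVec]

/-- The spectrum is finite, so its supremum stays below a strict bound on its elements; an empty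
spectrum has spectral radius `0`. -/
lemma spectralRadius_lt_one [DecidableEq m] (T : Matrix m m ℂ)
    (h : ∀ (μ : ℂ) (v : m → ℂ), v ≠ 0 → T *ᵥ v = μ • v → ‖μ‖ < 1) :
    spectralRadius ℂ T < 1 := by
  have hlt : ∀ μ ∈ spectrum ℂ T, (‖μ‖₊ : ENNReal) < 1 := by
    intro μ hμ
    rw [← spectrum_toLin'] at hμ
    obtain ⟨v, hv⟩ := (Module.End.hasEigenvalue_iff_mem_spectrum.2 hμ).exists_hasEigenvector
    have := h μ v hv.2 (by simpa using hv.apply_eq_smul)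
    exact_mod_cast this
  have hfin := Matrix.finite_spectrum T
  have : spectralRadius ℂ T = hfin.toFinset.sup fun μ => (‖μ‖₊ : ENNReal) := by
    simp [spectralRadius, Finset.sup_eq_iSup]
  rw [this, Finset.sup_lt_iff (by simp)]
  simpa using hlt

/-- The alternating-direction iteration for arbitrary, not necessarily commuting, splittings. -/
lemma spectralRadius_adi_lt_one [DecidableEq m] {H V : Matrix m m ℝ} (hH : (H + Hᵀ).PosSemidef)
    (hV : (V + Vᵀ).PosSemidef) (hpd : (H + Hᵀ).PosDef ∨ (V + Vᵀ).PosDef)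
    {α : ℝ} (hα : 0 < α) :
    spectralRadius ℂ (((α • (1 : Matrix m m ℝ) + V)⁻¹ * (α • (1 : Matrix m m ℝ) - H) *
      (α • (1 : Matrix m m ℝ) + H)⁻¹ * (α • (1 : Matrix m m ℝ) - V)).map Complex.ofReal) < 1 := by
  refine spectralRadius_lt_one _ fun μ v hv hT => ?_
  have uH := (isUnit_iff_isUnit_det _).1 (isUnit_smul_one_add hH hα)
  have uV := (isUnit_iff_isUnit_det _).1 (isUnit_smul_one_add hV hα)
  have hmul (X Y : Matrix m m ℝ) :
      (X * Y).map Complex.ofReal = X.map Complex.ofReal * Y.map Complex.ofReal :=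
    Matrix.map_mul (f := Complex.ofRealHom)
  have hadj (M : Matrix m m ℝ) : (M + Mᵀ).map Complex.ofReal =
      M.map Complex.ofReal + (M.map Complex.ofReal)ᴴ := by
    ext i j
    simp
  set W := (α • (1 : Matrix m m ℝ) + H)⁻¹ * (α • (1 : Matrix m m ℝ) - V) with hW
  refine eigenvalue_norm_lt_one (H := H.map Complex.ofReal) (V := V.map Complex.ofReal)
    (w := W.map Complex.ofReal *ᵥ v) ?_ ?_ ?_ hα hv ?_ ?_
  · rw [← hadj]
    exact posSemidef_map_ofReal hH
  · rw [← hadj]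
    exact posSemidef_map_ofReal hV
  · rw [← hadj, ← hadj]
    exact hpd.imp posDef_map_ofReal posDef_map_ofReal
  · rw [← map_smul_one_add_mulVec, ← map_smul_one_sub_mulVec, mulVec_mulVec, ← hmul, hW,
      mul_nonsing_inv_cancel_left _ _ uH]
  · rw [← map_smul_one_add_mulVec, ← map_smul_one_sub_mulVec, mulVec_mulVec, ← hmul,
      ← mulVec_smul, ← hT, mulVec_mulVec, ← hmul, mul_assoc, mul_assoc, ← hW,
      mul_nonsing_inv_cancel_left _ _ uV]

end Aux

/-- Convergence of the ADI-like iteration: if `A + Aᵀ` and `B + Bᵀ` are positive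
semidefinite and at least one of them is positive definite, then for every `α > 0` the
matrices `αI + A⊗Iₙ` and `αI + Iₙ⊗B` are invertible and the ADI iteration matrix
`T_α = (αI + Iₙ⊗B)⁻¹(αI − A⊗Iₙ)(αI + A⊗Iₙ)⁻¹(αI − Iₙ⊗B)` has spectral radius `< 1`. -/
theorem adi_iteration_convergence (n : ℕ) (A B : Matrix (Fin n) (Fin n) ℝ)
    (hA : (A + Aᵀ).PosSemidef) (hB : (B + Bᵀ).PosSemidef)
    (hpd : (A + Aᵀ).PosDef ∨ (B + Bᵀ).PosDef)
    (α : ℝ) (hα : 0 < α) :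
    IsUnit (α • (1 : Matrix (Fin n × Fin n) (Fin n × Fin n) ℝ) +
      A ⊗ₖ (1 : Matrix (Fin n) (Fin n) ℝ)) ∧
    IsUnit (α • (1 : Matrix (Fin n × Fin n) (Fin n × Fin n) ℝ) +
      (1 : Matrix (Fin n) (Fin n) ℝ) ⊗ₖ B) ∧
    spectralRadius ℂ
      (((α • (1 : Matrix (Fin n × Fin n) (Fin n × Fin n) ℝ) +
            (1 : Matrix (Fin n) (Fin n) ℝ) ⊗ₖ B)⁻¹ *
        (α • (1 : Matrix (Fin n × Fin n) (Fin n × Fin n) ℝ) -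
            A ⊗ₖ (1 : Matrix (Fin n) (Fin n) ℝ)) *
        (α • (1 : Matrix (Fin n × Fin n) (Fin n × Fin n) ℝ) +
            A ⊗ₖ (1 : Matrix (Fin n) (Fin n) ℝ))⁻¹ *
        (α • (1 : Matrix (Fin n × Fin n) (Fin n × Fin n) ℝ) -
            (1 : Matrix (Fin n) (Fin n) ℝ) ⊗ₖ B)).map Complex.ofReal) < 1 := by
  have eA : A ⊗ₖ (1 : Matrix (Fin n) (Fin n) ℝ) + (A ⊗ₖ (1 : Matrix (Fin n) (Fin n) ℝ))ᵀ =
      (A + Aᵀ) ⊗ₖ (1 : Matrix (Fin n) (Fin n) ℝ) := by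
    rw [add_kronecker, ← kroneckerMap_transpose, transpose_one]
  have eB : (1 : Matrix (Fin n) (Fin n) ℝ) ⊗ₖ B + ((1 : Matrix (Fin n) (Fin n) ℝ) ⊗ₖ B)ᵀ =
      (1 : Matrix (Fin n) (Fin n) ℝ) ⊗ₖ (B + Bᵀ) := by
    rw [kronecker_add, ← kroneckerMap_transpose, transpose_one]
  have hA' := hA.kronecker (PosSemidef.one (n := Fin n) (R := ℝ))
  have hB' := (PosSemidef.one (n := Fin n) (R := ℝ)).kronecker hB
  have hpd' := hpd.imp (fun h => h.kronecker (PosDef.one (n := Fin n) (R := ℝ)))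
    (fun h => (PosDef.one (n := Fin n) (R := ℝ)).kronecker h)
  rw [← eA] at hA'
  rw [← eB] at hB'
  rw [← eA, ← eB] at hpd'
  exact ⟨isUnit_smul_one_add hA' hα, isUnit_smul_one_add hB' hα,
    spectralRadius_adi_lt_one hA' hB' hpd' hα⟩
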